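/- Let a > 0, ε ∈ ℝ, m₀ a nonzero integer, Y : [−1, 1] → ℂ twice continuously differentiable, and let u be the separated field of zonal wavenumber m₀ with profile Y; write u¹ = Re u, u² = Im u. Let g : [−1, 1] → ℝ be continuous and set w = (g(y), 0). Then G(u¹, u¹, w) = G(u², u², w) and G(u¹, u², w) = −G(u², u¹, w), where G(u, v, w) = −ε ∫_Ω ((u·∇)v)·conj(w) dx dy. -/

import Mathlib

open Complex

/-- Partial derivative in `x`. -/
noncomputable def pdx (f : ℝ → ℝ → ℂ) : ℝ → ℝ → ℂ :=
  fun x y => deriv (fun t => f t y) x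

/-- Partial derivative in `y`. -/
noncomputable def pdy (f : ℝ → ℝ → ℂ) : ℝ → ℝ → ℂ :=
  fun x y => deriv (fun t => f x t) y

/-- First component of a complex vector field. -/
def c1 (u : ℝ → ℝ → ℂ × ℂ) : ℝ → ℝ → ℂ := fun x y => (u x y).1

/-- Second component of a complex vector field. -/
def c2 (u : ℝ → ℝ → ℂ × ℂ) : ℝ → ℝ → ℂ := fun x y => (u x y).2

/-- The trilinear form `G(u,v,w) = -ε ∫_Ω ((u·∇)v)·conj(w) dx dy` over the channel
`Ω = (0, 2/a) × (-1, 1)`. -/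
noncomputable def trilinG (a ε : ℝ) (u v w : ℝ → ℝ → ℂ × ℂ) : ℂ :=
  -(ε : ℂ) * ∫ x in (0 : ℝ)..(2 / a), ∫ y in (-1 : ℝ)..1,
    ((c1 u x y * pdx (c1 v) x y + c2 u x y * pdy (c1 v) x y) * (starRingEnd ℂ) (c1 w x y)
      + (c1 u x y * pdx (c2 v) x y + c2 u x y * pdy (c2 v) x y) * (starRingEnd ℂ) (c2 w x y))

/-- The separated field of zonal wavenumber `p` with profile `Y`:
`u = (∂ψ/∂y, -∂ψ/∂x)` where `ψ(x,y) = e^{i a p π x} Y(y)`. -/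
noncomputable def sepField (a : ℝ) (p : ℤ) (Y : ℝ → ℂ) : ℝ → ℝ → ℂ × ℂ :=
  fun x y =>
    (pdy (fun (x y : ℝ) =>
        Complex.exp (Complex.I * ((a * p * Real.pi : ℝ) : ℂ) * ((x : ℝ) : ℂ)) * Y y) x y,
     -pdx (fun (x y : ℝ) =>
        Complex.exp (Complex.I * ((a * p * Real.pi : ℝ) : ℂ) * ((x : ℝ) : ℂ)) * Y y) x y)

/-- Real part of a complex vector field, viewed again as a complex vector field. -/
noncomputable def reField (u : ℝ → ℝ → ℂ × ℂ) : ℝ → ℝ → ℂ × ℂ :=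
  fun x y => (((u x y).1.re : ℂ), ((u x y).2.re : ℂ))

/-- Imaginary part of a complex vector field, viewed again as a complex vector field. -/
noncomputable def imField (u : ℝ → ℝ → ℂ × ℂ) : ℝ → ℝ → ℂ × ℂ :=
  fun x y => (((u x y).1.im : ℂ), ((u x y).2.im : ℂ))

/-!
The form `G` is invariant under simultaneous translation in `x` of three `2 / a`-periodic fields.
Translating by a quarter wavelength `s = 1 / (2 a m₀)` multiplies the separated field
`u = u¹ + i u²` by `i`, that is, `u¹ ↦ -u²` and `u² ↦ u¹`, while it fixes the zonal-mean field `w`.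
Hence `G(u¹, u¹, w) = G(-u², -u², w) = G(u², u², w)` and
`G(u¹, u², w) = G(-u², u¹, w) = -G(u², u¹, w)`.
-/

section PartialDerivatives

variable (f : ℝ → ℝ → ℂ)

lemma pdx_comp_add_right (c : ℝ) : pdx (fun x => f (x + c)) = fun x => pdx f (x + c) := by
  funext x y
  exact deriv_comp_add_const (fun t => f t y) c x

lemma pdx_const_smul (z : ℂ) : pdx (z • f) = z • pdx f := by
  funext x y
  exact deriv_const_mul_field z

lemma pdy_const_smul (z : ℂ) : pdy (z • f) = z • pdy f := by
  funext x y
  exact deriv_const_mul_field z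

end PartialDerivatives

section TrilinearForm

/-- The inner integral of the trilinear form, `∫ ((u·∇)v)·conj(w) dy` over the cross-section of the
channel at the abscissa `x`; it turns translations of the fields into translations of `x`. -/
noncomputable def sliceG (u v w : ℝ → ℝ → ℂ × ℂ) (x : ℝ) : ℂ :=
  ∫ y in (-1 : ℝ)..1,
    ((c1 u x y * pdx (c1 v) x y + c2 u x y * pdy (c1 v) x y) * (starRingEnd ℂ) (c1 w x y)
      + (c1 u x y * pdx (c2 v) x y + c2 u x y * pdy (c2 v) x y) * (starRingEnd ℂ) (c2 w x y))

variable (a ε : ℝ) {u v w : ℝ → ℝ → ℂ × ℂ}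

lemma trilinG_eq_integral_sliceG (u v w : ℝ → ℝ → ℂ × ℂ) :
    trilinG a ε u v w = -(ε : ℂ) * ∫ x in (0 : ℝ)..(2 / a), sliceG u v w x :=
  rfl

lemma sliceG_comp_add_right (u v w : ℝ → ℝ → ℂ × ℂ) (c x : ℝ) :
    sliceG (fun x => u (x + c)) (fun x => v (x + c)) (fun x => w (x + c)) x
      = sliceG u v w (x + c) := by
  have hc1 : pdx (c1 fun x => v (x + c)) = fun x => pdx (c1 v) (x + c) :=
    pdx_comp_add_right (c1 v) c
  have hc2 : pdx (c2 fun x => v (x + c)) = fun x => pdx (c2 v) (x + c) :=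
    pdx_comp_add_right (c2 v) c
  simp only [sliceG, hc1, hc2]
  rfl

lemma periodic_sliceG {c : ℝ} (hu : Function.Periodic u c) (hv : Function.Periodic v c)
    (hw : Function.Periodic w c) : Function.Periodic (sliceG u v w) c := fun x => by
  rw [← sliceG_comp_add_right, hu.funext, hv.funext, hw.funext]

lemma trilinG_comp_add_right (hu : Function.Periodic u (2 / a)) (hv : Function.Periodic v (2 / a))
    (hw : Function.Periodic w (2 / a)) (c : ℝ) :
    trilinG a ε (fun x => u (x + c)) (fun x => v (x + c)) (fun x => w (x + c))
      = trilinG a ε u v w := by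
  have hshift : ∫ x in (0 : ℝ)..(2 / a), sliceG u v w (x + c)
      = ∫ x in (0 : ℝ)..(2 / a), sliceG u v w x := by
    simpa [add_comm] using (periodic_sliceG hu hv hw).intervalIntegral_add_eq c 0
  simp only [trilinG_eq_integral_sliceG, sliceG_comp_add_right, hshift]

variable (u v w)

lemma sliceG_smul_left (z : ℂ) (x : ℝ) : sliceG (z • u) v w x = z * sliceG u v w x := by
  rw [sliceG, sliceG, ← intervalIntegral.integral_const_mul]
  congr 1 with y
  simp only [c1, c2, Pi.smul_apply, Prod.smul_fst, Prod.smul_snd, smul_eq_mul]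
  ring

lemma sliceG_smul_middle (z : ℂ) (x : ℝ) : sliceG u (z • v) w x = z * sliceG u v w x := by
  have hc1 : c1 (z • v) = z • c1 v := rfl
  have hc2 : c2 (z • v) = z • c2 v := rfl
  rw [sliceG, sliceG, ← intervalIntegral.integral_const_mul]
  congr 1 with y
  simp only [hc1, hc2, pdx_const_smul, pdy_const_smul, Pi.smul_apply, smul_eq_mul]
  ring

lemma trilinG_smul_left (z : ℂ) : trilinG a ε (z • u) v w = z * trilinG a ε u v w := by
  simp only [trilinG_eq_integral_sliceG, sliceG_smul_left, intervalIntegral.integral_const_mul]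
  ring

lemma trilinG_smul_middle (z : ℂ) : trilinG a ε u (z • v) w = z * trilinG a ε u v w := by
  simp only [trilinG_eq_integral_sliceG, sliceG_smul_middle, intervalIntegral.integral_const_mul]
  ring

lemma trilinG_neg_left : trilinG a ε (-u) v w = -trilinG a ε u v w := by
  simpa using trilinG_smul_left a ε u v w (-1)

lemma trilinG_neg_middle : trilinG a ε u (-v) w = -trilinG a ε u v w := by
  simpa using trilinG_smul_middle a ε u v w (-1)

end TrilinearForm

section QuarterShift

variable {s : ℝ} {u : ℝ → ℝ → ℂ × ℂ}

lemma reField_add_of_add_eq_I_smul (hu : ∀ x, u (x + s) = I • u x) (x : ℝ) :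
    reField u (x + s) = -imField u x := by
  funext y
  simp [reField, imField, hu]

lemma imField_add_of_add_eq_I_smul (hu : ∀ x, u (x + s) = I • u x) (x : ℝ) :
    imField u (x + s) = reField u x := by
  funext y
  simp [reField, imField, hu]

lemma periodic_of_add_eq_I_smul (hu : ∀ x, u (x + s) = I • u x) :
    Function.Periodic u (4 * s) := by
  have hanti : Function.Antiperiodic u (2 * s) := fun x => by
    rw [two_mul, ← add_assoc, hu, hu, smul_smul, I_mul_I, neg_one_smul]
  rw [show 4 * s = 2 * (2 * s) by ring]
  exact hanti.periodic_two_mul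

theorem zonal_mean_interaction_symmetries_general (a ε : ℝ) {w : ℝ → ℝ → ℂ × ℂ}
    (hu : ∀ x, u (x + s) = I • u x) (hw : Function.Periodic w s)
    (n : ℤ) (hn : 2 / a = n * (4 * s)) :
    trilinG a ε (reField u) (reField u) w = trilinG a ε (imField u) (imField u) w ∧
    trilinG a ε (reField u) (imField u) w = -trilinG a ε (imField u) (reField u) w := by
  have hu_per : Function.Periodic u (2 / a) := hn ▸ (periodic_of_add_eq_I_smul hu).int_mul n
  have hw_per : Function.Periodic w (2 / a) := by
    simpa [hn, mul_assoc] using hw.int_mul (n * 4)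
  have hre_per : Function.Periodic (reField u) (2 / a) := fun x => by
    unfold reField
    rw [hu_per x]
  have him_per : Function.Periodic (imField u) (2 / a) := fun x => by
    unfold imField
    rw [hu_per x]
  have hre : (fun x => reField u (x + s)) = -imField u := funext (reField_add_of_add_eq_I_smul hu)
  have him : (fun x => imField u (x + s)) = reField u := funext (imField_add_of_add_eq_I_smul hu)
  constructor
  · rw [← trilinG_comp_add_right a ε hre_per hre_per hw_per s, hre, hw.funext,
      trilinG_neg_left, trilinG_neg_middle, neg_neg]
  · rw [← trilinG_comp_add_right a ε hre_per him_per hw_per s, hre, him, hw.funext,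
      trilinG_neg_left]

end QuarterShift

section SeparatedField

variable (a : ℝ) (p : ℤ) (Y : ℝ → ℂ)

/-- The streamfunction `ψ(x, y) = e^{i a p π x} Y(y)` of the separated field `sepField a p Y`. -/
noncomputable def sepStream : ℝ → ℝ → ℂ :=
  fun x y => exp (I * ((a * p * Real.pi : ℝ) : ℂ) * (x : ℂ)) * Y y

lemma sepField_eq_sepStream :
    sepField a p Y = fun x y => (pdy (sepStream a p Y) x y, -pdx (sepStream a p Y) x y) :=
  rfl

lemma sepStream_comp_add_right (c : ℝ) :
    (fun x => sepStream a p Y (x + c))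
      = exp (I * ((a * p * Real.pi : ℝ) : ℂ) * (c : ℂ)) • sepStream a p Y := by
  funext x y
  simp only [sepStream, ofReal_add, mul_add, exp_add, Pi.smul_apply, smul_eq_mul]
  ring

lemma sepField_add (c x : ℝ) :
    sepField a p Y (x + c)
      = exp (I * ((a * p * Real.pi : ℝ) : ℂ) * (c : ℂ)) • sepField a p Y x := by
  have hpdx := pdx_comp_add_right (sepStream a p Y) c
  have hpdy : pdy (fun x => sepStream a p Y (x + c)) = fun x => pdy (sepStream a p Y) (x + c) := rfl
  rw [sepStream_comp_add_right, pdx_const_smul] at hpdx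
  rw [sepStream_comp_add_right, pdy_const_smul] at hpdy
  funext y
  simp only [sepField_eq_sepStream, ← congrFun hpdx x, ← congrFun hpdy x, Pi.smul_apply,
    Prod.smul_mk, smul_neg]

variable {a p}

lemma sepField_add_quarter_wavelength (ha : a ≠ 0) (hp : p ≠ 0) (x : ℝ) :
    sepField a p Y (x + 1 / (2 * a * p)) = I • sepField a p Y x := by
  have ha' : (a : ℂ) ≠ 0 := ofReal_ne_zero.mpr ha
  have hphase : I * ((a * p * Real.pi : ℝ) : ℂ) * ((1 / (2 * a * p) : ℝ) : ℂ)
      = Real.pi / 2 * I := by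
    push_cast
    field_simp
  rw [sepField_add, hphase, exp_pi_div_two_mul_I]

end SeparatedField

/-- Interaction symmetries of the real and imaginary parts `u¹, u²` of a separated field of
nonzero zonal wavenumber `m₀` with a zonal-mean field `w = (g(y), 0)`:
`G(u¹,u¹,w) = G(u²,u²,w)` and `G(u¹,u²,w) = -G(u²,u¹,w)`. -/
theorem zonal_mean_interaction_symmetries (a ε : ℝ) (ha : 0 < a)
    (m₀ : ℤ) (hm₀ : m₀ ≠ 0)
    (Y : ℝ → ℂ) (hY : ContDiff ℝ 2 Y)
    (g : ℝ → ℝ) (hg : Continuous g)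
    (u1 u2 w : ℝ → ℝ → ℂ × ℂ)
    (hu1 : u1 = reField (sepField a m₀ Y))
    (hu2 : u2 = imField (sepField a m₀ Y))
    (hw : w = fun (_ y : ℝ) => (((g y : ℝ) : ℂ), (0 : ℂ))) :
    trilinG a ε u1 u1 w = trilinG a ε u2 u2 w ∧
    trilinG a ε u1 u2 w = -trilinG a ε u2 u1 w := by
  subst hu1 hu2 hw
  exact zonal_mean_interaction_symmetries_general a ε
    (sepField_add_quarter_wavelength Y ha.ne' hm₀) (fun _ => rfl) m₀ (by field_simp; norm_num)
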